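/- arXiv:0811.0186 — 4 statements merged into one kernel-verified Lean document; each statement's English description precedes it below -/
import Mathlib

section
/- Let G = (V,E) be a finite multigraph and let e be a regular edge of G (neither a bridge nor a self-loop). Then the Tutte polynomial defined by the subset expansion satisfies the deletion–contraction relation T_G(x,y) = T_{G/e}(x,y) + T_{G−e}(x,y). -/
/-!
Write `E' = E \ {e}`. The subsets of `E` are exactly the sets `B` and `B ∪ {e}` with `B ⊆ E'`,
so the subset expansion of `T_G` splits into two sums over subsets of `E'`.

* The sets `B` avoiding `e` give `T_{G-e}`: the spanning subgraphs `(V, B)` of `G` and of `G - e`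
  coincide (`k_delete`), and `r(E') = r(E)` because `e` is not a bridge.
* The sets `B ∪ {e}` give `T_{G/e}`: the components of `(V/e, B)` in `G/e` are those of
  `(V, B ∪ {e})` in `G` (`k_contract`), and `|V/e| = |V| - 1` because `e` is not a self-loop
  (`card_contr`). Hence all ranks drop by one, rank differences are unchanged, and the nullity of
  `B` in `G/e` equals the nullity of `B ∪ {e}` in `G`.
-/


open Finset

attribute [local instance] Classical.propDecidable

/-- A finite multigraph: vertex type `V`, edge type `E`, each edge carrying an
ordered pair of (possibly equal) endpoints (the order is an arbitrary orientation). -/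
structure Multigraph (V E : Type) where
  ends : E → V × V

namespace Multigraph

variable {V E Fl : Type} {d : ℕ}

/-- `v` and `w` are joined by an edge of `A`. -/
def edgeRel (G : Multigraph V E) (A : Finset E) (v w : V) : Prop :=
  ∃ e ∈ A, G.ends e = (v, w) ∨ G.ends e = (w, v)

/-- The partition of `V` into connected components of the spanning subgraph `(V, A)`. -/
def compSetoid (G : Multigraph V E) (A : Finset E) : Setoid V :=
  Relation.EqvGen.setoid (G.edgeRel A)

/-- `v` and `w` lie in the same connected component of the spanning subgraph `(V, A)`. -/
def Reach (G : Multigraph V E) (A : Finset E) (v w : V) : Prop :=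
  Relation.EqvGen (G.edgeRel A) v w

/-- `k A`: the number of connected components of the spanning subgraph `(V, A)`. -/
noncomputable def k (G : Multigraph V E) (A : Finset E) : ℕ :=
  Nat.card (Quotient (G.compSetoid A))

/-- The rank `r(A) = |V| - k(A)` of the spanning subgraph `(V, A)`. -/
noncomputable def rank (G : Multigraph V E) (A : Finset E) : ℕ :=
  Nat.card V - G.k A

/-- The nullity `n(A) = |A| + k(A) - |V|` of the spanning subgraph `(V, A)`. -/
noncomputable def nullity (G : Multigraph V E) (A : Finset E) : ℕ :=
  A.card + G.k A - Nat.card V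

/-- A self-loop: both endpoints coincide. -/
def IsLoop (G : Multigraph V E) (e : E) : Prop :=
  (G.ends e).1 = (G.ends e).2

/-- A bridge: deleting the edge increases the number of connected components. -/
def IsBridge (G : Multigraph V E) [Fintype E] (e : E) : Prop :=
  G.k (Finset.univ.erase e) ≠ G.k Finset.univ

/-- The Tutte polynomial, via the subset (rank–nullity) expansion. -/
noncomputable def tutte (G : Multigraph V E) [Fintype E] (x y : ℝ) : ℝ :=
  ∑ A : Finset E,
    (x - 1) ^ (G.rank Finset.univ - G.rank A) * (y - 1) ^ G.nullity A

/-- Deletion of the edge `e`. -/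
def delete (G : Multigraph V E) (e : E) : Multigraph V {e' : E // e' ≠ e} :=
  ⟨fun e' => G.ends e'⟩

/-- The setoid identifying the two endpoints of `e`. -/
def contrSetoid (G : Multigraph V E) (e : E) : Setoid V :=
  Relation.EqvGen.setoid (fun v w => G.ends e = (v, w))

/-- Contraction of the edge `e`: its endpoints are identified and `e` is removed.
(For a self-loop this yields a graph isomorphic to the deletion `G - e`,
in accordance with the convention `G/e = G - e` for self-loops.) -/
def contract (G : Multigraph V E) (e : E) :
    Multigraph (Quotient (G.contrSetoid e)) {e' : E // e' ≠ e} :=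
  ⟨fun e' => (Quotient.mk _ (G.ends e'.1).1, Quotient.mk _ (G.ends e'.1).2)⟩

/-- The multivariate Tutte polynomial `Z_G(q, β)`. -/
noncomputable def multiTutte (G : Multigraph V E) [Fintype E] (q : ℝ) (β : E → ℝ) : ℝ :=
  ∑ A : Finset E, q ^ G.k A * ∏ e ∈ A, β e

/-- `(V, A)` is acyclic (a forest): every edge of `A` is a bridge of `(V, A)`. -/
def IsForest (G : Multigraph V E) [DecidableEq E] (A : Finset E) : Prop :=
  ∀ e ∈ A, G.k (A.erase e) ≠ G.k A

/-- First Symanzik polynomial: sum over spanning trees `T` of `∏_{e ∉ T} α_e`. -/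
noncomputable def treePoly (G : Multigraph V E) [Fintype E] [DecidableEq E] (α : E → ℝ) : ℝ :=
  ∑ A ∈ Finset.univ.filter (fun A => G.IsForest A ∧ G.k A = 1),
    ∏ e ∈ Finset.univ \ A, α e

/-- The total weight `q_C` of the component `c` of the spanning subgraph `(V, A)`. -/
noncomputable def qComp (G : Multigraph V E) [Fintype V] (A : Finset E) (q : V → ℝ)
    (c : Quotient (G.compSetoid A)) : ℝ :=
  ∑ v ∈ Finset.univ.filter (fun v => Quotient.mk (G.compSetoid A) v = c), q v

/-- Generalized first Symanzik polynomial `𝒰_G(α, q)`. -/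
noncomputable def genU (G : Multigraph V E) [Fintype V] [Fintype E] [DecidableEq E]
    (α : E → ℝ) (q : V → ℝ) : ℝ :=
  ∑ A ∈ Finset.univ.filter (fun A => G.IsForest A),
    (∏ e ∈ Finset.univ \ A, α e) * ∏ c : Quotient (G.compSetoid A), G.qComp A q c

end Multigraph

/-- Euclidean dot product on `ℝ^d`. -/
def dotp {d : ℕ} (x y : Fin d → ℝ) : ℝ := ∑ i, x i * y i

/-- Total flag momentum `p_v` at the vertex `v`. -/
noncomputable def flagP {V Fl : Type} {d : ℕ} [Fintype Fl] (attach : Fl → V)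
    (p : Fl → Fin d → ℝ) (v : V) : Fin d → ℝ :=
  ∑ f ∈ Finset.univ.filter (fun f => attach f = v), p f

namespace Multigraph

/-- Total momentum `p_C` of the component `c` of the spanning subgraph `(V, A)`. -/
noncomputable def pComp (G : Multigraph V E) [Fintype Fl] (A : Finset E) (attach : Fl → V)
    (p : Fl → Fin d → ℝ) (c : Quotient (G.compSetoid A)) : Fin d → ℝ :=
  ∑ f ∈ Finset.univ.filter (fun f => Quotient.mk (G.compSetoid A) (attach f) = c), p f

/-- Generalized second Symanzik polynomial `𝒱_G(α, q, p)`. -/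
noncomputable def genV (G : Multigraph V E) [Fintype V] [Fintype E] [DecidableEq E] [Fintype Fl]
    (α : E → ℝ) (q : V → ℝ) (attach : Fl → V) (p : Fl → Fin d → ℝ) : ℝ :=
  ∑ A ∈ Finset.univ.filter (fun A => G.IsForest A),
    (∏ e ∈ Finset.univ \ A, α e) *
      ∑ c : Quotient (G.compSetoid A),
        dotp (G.pComp A attach p c) (G.pComp A attach p c) *
          ∏ c' ∈ Finset.univ.erase c, G.qComp A q c'

/-- Adding one new edge joining `v` and `v'`. -/
def addEdge (G : Multigraph V E) (v v' : V) : Multigraph V (Option E) :=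
  ⟨fun e => e.elim (v, v') G.ends⟩

/-- Signed incidence matrix `ε_{ev}` (vanishing on self-loops). -/
noncomputable def eps (G : Multigraph V E) (e : E) (v : V) : ℝ :=
  (if (G.ends e).1 = v then 1 else 0) - (if (G.ends e).2 = v then 1 else 0)

end Multigraph

namespace Multigraph

variable {V E : Type}

theorem eq_of_eqvGen {α β : Type} {r : α → α → Prop} {f : α → β}
    (h : ∀ a b, r a b → f a = f b) {a b : α} (hab : Relation.EqvGen r a b) : f a = f b := by
  induction hab with
  | rel _ _ h1 => exact h _ _ h1
  | refl _ => rfl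
  | symm _ _ _ ih => exact ih.symm
  | trans _ _ _ _ _ ih1 ih2 => exact ih1.trans ih2

/-- A subset of `E \ {e}`, regarded as a subset of `E`. -/
def lift (e : E) (B : Finset {e' : E // e' ≠ e}) : Finset E :=
  B.map (Function.Embedding.subtype _)

theorem mem_lift {e a : E} {B : Finset {e' : E // e' ≠ e}} :
    a ∈ lift e B ↔ ∃ h : a ≠ e, (⟨a, h⟩ : {e' : E // e' ≠ e}) ∈ B := by
  simp [lift]

theorem notMem_lift (e : E) (B : Finset {e' : E // e' ≠ e}) : e ∉ lift e B := by
  simp [mem_lift]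

theorem k_delete (G : Multigraph V E) (e : E) (B : Finset {e' : E // e' ≠ e}) :
    (G.delete e).k B = G.k (lift e B) := by
  have h : (G.delete e).edgeRel B = G.edgeRel (lift e B) := by
    funext v w
    apply propext
    constructor
    · rintro ⟨a, ha, h⟩
      exact ⟨a.1, mem_lift.2 ⟨a.2, ha⟩, h⟩
    · rintro ⟨a, ha, h⟩
      obtain ⟨h1, h2⟩ := mem_lift.1 ha
      exact ⟨⟨a, h1⟩, h2, h⟩
  simp only [k, compSetoid, h]

/-- Contracting `e` does not change the number of components of an edge set containing `e`. -/
theorem k_contract [DecidableEq E] (G : Multigraph V E) (e : E)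
    (B : Finset {e' : E // e' ≠ e}) :
    (G.contract e).k B = G.k (insert e (lift e B)) := by
  have h0 : ∀ v w : V, G.ends e = (v, w) →
      Quotient.mk (G.compSetoid (insert e (lift e B))) v = Quotient.mk _ w := fun v w h =>
    Quotient.sound (Relation.EqvGen.rel _ _ ⟨e, by simp, Or.inl h⟩)
  have h1 : ∀ p q : Quotient (G.contrSetoid e), (G.contract e).edgeRel B p q →
      Quotient.lift (Quotient.mk (G.compSetoid (insert e (lift e B))))
        (fun _ _ h => eq_of_eqvGen h0 h) p = Quotient.lift _
        (fun _ _ h => eq_of_eqvGen h0 h) q := by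
    rintro p q ⟨a, ha, h⟩
    have key : Quotient.mk (G.compSetoid (insert e (lift e B))) (G.ends a.1).1
        = Quotient.mk _ (G.ends a.1).2 :=
      Quotient.sound (Relation.EqvGen.rel _ _
        ⟨a.1, Finset.mem_insert_of_mem (mem_lift.2 ⟨a.2, ha⟩), Or.inl rfl⟩)
    rcases h with h | h
    · obtain ⟨rfl, rfl⟩ := Prod.mk.inj h
      exact key
    · obtain ⟨rfl, rfl⟩ := Prod.mk.inj h
      exact key.symm
  have h2 : ∀ v w : V, G.edgeRel (insert e (lift e B)) v w →
      Quotient.mk ((G.contract e).compSetoid B) (Quotient.mk (G.contrSetoid e) v)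
        = Quotient.mk _ (Quotient.mk _ w) := by
    have key : ∀ a ∈ insert e (lift e B),
        Quotient.mk ((G.contract e).compSetoid B) (Quotient.mk (G.contrSetoid e) (G.ends a).1)
          = Quotient.mk _ (Quotient.mk _ (G.ends a).2) := by
      intro a ha
      rcases Finset.mem_insert.1 ha with rfl | ha
      · exact congrArg _ (Quotient.sound (Relation.EqvGen.rel _ _ rfl))
      · obtain ⟨h1, h2⟩ := mem_lift.1 ha
        exact Quotient.sound (Relation.EqvGen.rel _ _ ⟨⟨a, h1⟩, h2, Or.inl rfl⟩)
    rintro v w ⟨a, ha, h⟩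
    have := key a ha
    rcases h with h | h <;> rw [h] at this
    · exact this
    · exact this.symm
  exact Nat.card_congr
    { toFun := Quotient.lift _ fun _ _ h => eq_of_eqvGen h1 h
      invFun := Quotient.lift _ fun _ _ h => eq_of_eqvGen h2 h
      left_inv := by rintro ⟨⟨v⟩⟩; rfl
      right_inv := by rintro ⟨v⟩; rfl }

/-- Contracting a non-loop identifies exactly two vertices: every class has a unique
representative other than the second endpoint of `e`. -/
theorem card_contr [Fintype V] (G : Multigraph V E) (e : E) (hloop : ¬ G.IsLoop e) :
    Nat.card (Quotient (G.contrSetoid e)) + 1 = Nat.card V := by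
  obtain ⟨a, b, hab⟩ : ∃ a b, G.ends e = (a, b) := ⟨_, _, rfl⟩
  have hne : a ≠ b := by simpa [IsLoop, hab] using hloop
  let f : V → {v : V // v ≠ b} := fun v => if h : v = b then ⟨a, hne⟩ else ⟨v, h⟩
  have hf : ∀ v w, G.ends e = (v, w) → f v = f w := by
    intro v w h
    rw [hab] at h
    obtain ⟨rfl, rfl⟩ := Prod.mk.inj h
    simp [f, hne]
  have e1 : Nat.card (Quotient (G.contrSetoid e)) = Nat.card {v : V // v ≠ b} := Nat.card_congr
    { toFun := Quotient.lift f fun _ _ h => eq_of_eqvGen hf h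
      invFun := fun v => Quotient.mk _ v.1
      left_inv := by
        rintro ⟨v⟩
        change Quotient.mk (G.contrSetoid e) (f v).1 = Quotient.mk _ v
        by_cases h : v = b
        · subst h
          simp only [f, dif_pos]
          exact Quotient.sound (Relation.EqvGen.rel _ _ hab)
        · simp [f, h]
      right_inv := by
        rintro ⟨v, hv⟩
        simp [f, hv] }
  have hpos : 0 < Fintype.card V := Fintype.card_pos_iff.2 ⟨a⟩
  rw [e1, Nat.card_eq_fintype_card, Nat.card_eq_fintype_card, Fintype.card_subtype_compl,
    Fintype.card_subtype_eq]
  omega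

theorem k_le [Finite V] (G : Multigraph V E) (A : Finset E) : G.k A ≤ Nat.card V :=
  Nat.card_le_card_of_surjective _ Quotient.mk_surjective

theorem lift_univ [Fintype E] [DecidableEq E] (e : E) [Fintype {e' : E // e' ≠ e}] :
    lift e Finset.univ = Finset.univ.erase e := by
  ext a
  simp [mem_lift]

/-- Every subset of `E` is `B` or `B ∪ {e}` for a unique `B ⊆ E \ {e}`. -/
theorem sum_split [Fintype E] [DecidableEq E] (e : E) (f : Finset E → ℝ) :
    ∑ A : Finset E, f A
      = ∑ B : Finset {e' : E // e' ≠ e}, f (insert e (lift e B))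
        + ∑ B : Finset {e' : E // e' ≠ e}, f (lift e B) := by
  have h : ∀ g : Finset E → ℝ, ∑ A ∈ (Finset.univ.erase e).powerset, g A
      = ∑ B : Finset {e' : E // e' ≠ e}, g (lift e B) := by
    intro g
    symm
    refine Finset.sum_bij (fun B _ => lift e B) ?_ ?_ ?_ ?_
    · intro B _
      rw [Finset.mem_powerset, ← lift_univ]
      exact Finset.map_subset_map.2 (Finset.subset_univ B)
    · intro B _ C _ h
      exact Finset.map_injective _ h
    · intro A hA
      refine ⟨A.subtype _, Finset.mem_univ _, ?_⟩
      ext a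
      simp only [mem_lift, Finset.mem_subtype, exists_prop, and_iff_right_iff_imp]
      exact fun ha => (Finset.mem_erase.1 (Finset.mem_powerset.1 hA ha)).1
    · intro B _
      rfl
  rw [← Finset.powerset_univ, ← Finset.insert_erase (Finset.mem_univ e),
    Finset.sum_powerset_insert (Finset.notMem_erase e _), h, h (fun A => f (insert e A)),
    add_comm]

end Multigraph



/-- deletion–contraction for the Tutte polynomial at a regular edge. -/
theorem tutte_deletion_contraction {V E : Type} [Fintype V] [Fintype E] [DecidableEq E]
    (G : Multigraph V E) (e : E) (hbridge : ¬ G.IsBridge e) (hloop : ¬ G.IsLoop e)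
    (x y : ℝ) :
    G.tutte x y = (G.contract e).tutte x y + (G.delete e).tutte x y := by
  have hcard := Multigraph.card_contr G e hloop
  have hk : G.k (Finset.univ.erase e) = G.k Finset.univ := by
    by_contra h
    apply hbridge
    unfold Multigraph.IsBridge
    convert h
  unfold Multigraph.tutte
  rw [Multigraph.sum_split e]
  congr 1
  · refine Finset.sum_congr rfl fun B _ => ?_
    have h1 := (G.contract e).k_le B
    have h2 := (G.contract e).k_le Finset.univ
    -- The bounds `k ≤ |V/e|` make the truncated subtractions in the rank differences exact.
    have hr : G.rank Finset.univ - G.rank (insert e (Multigraph.lift e B))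
        = (G.contract e).rank Finset.univ - (G.contract e).rank B := by
      simp only [Multigraph.rank, Multigraph.k_contract, Multigraph.lift_univ,
        Finset.insert_erase (Finset.mem_univ e)] at h1 h2 ⊢
      omega
    have hn : G.nullity (insert e (Multigraph.lift e B)) = (G.contract e).nullity B := by
      simp only [Multigraph.nullity, Multigraph.k_contract,
        Finset.card_insert_of_notMem (Multigraph.notMem_lift e B)]
      have : (Multigraph.lift e B).card = B.card := Finset.card_map _
      omega
    rw [hr, hn]
  · refine Finset.sum_congr rfl fun B _ => ?_
    have hB : (Multigraph.lift e B).card = B.card := Finset.card_map _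
    simp only [Multigraph.rank, Multigraph.nullity, Multigraph.k_delete, Multigraph.lift_univ,
      hk, hB]
end

section
/- Let G = (V,E) be a connected finite multigraph and let v ≠ v' be two distinct vertices. Let G(v,v') be the multigraph obtained from G by adding a new edge joining v and v' and then contracting that edge. Then Σ_{T spanning tree of G(v,v')} Π_{e∉T} α_e = Σ_{T₂ 2-tree of G separating v and v'} Π_{e∉T₂} α_e; that is, the first Symanzik polynomial of G(v,v') equals the generating polynomial of 2-trees of G separating v and v'. Consequently the second Symanzik polynomial V_G(α,p) = −(1/2) Σ_{v≠v'} p_v·p_{v'} Σ_{T₂ separating v,v'} Π_{e∉T₂} α_e can be written as V_G(α,p) = −(1/2) Σ_{v≠v'} p_v·p_{v'} U_{G(v,v')}(α). -/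
/-!
The spanning trees of `G(v, v')` are, as edge sets, exactly the 2-trees of `G` separating `v` and
`v'`; the equality of polynomials is then a reindexing of sums, and the formula for the second
Symanzik polynomial follows termwise.

The edges of `G(v, v')` are the edges of `G`, and the components of an edge set `A` in `G(v, v')`
correspond to the classes of `Multigraph.glue`, i.e. to the components of `A` in `G` with those of
`v` and `v'` merged (`comap_compSetoid_joined`). Merging distinct classes lowers their number by
exactly one (`card_glue`), so that `A` has one component in `G(v, v')` iff it has two in `G`,
provided it separates `v` and `v'`. The same count shows that `A` is a forest iff the endpoints
of every `e ∈ A` are not joined by `A - e` (`isForest_iff`). Hence `A` is a forest in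
`G(v, v')` iff it is one in `G` and separates `v` and `v'` (`isForest_joined`): a path from `v` to
`v'` in `A` becomes a cycle after contraction (`exists_glue_of_reach`), and conversely a cycle
created by the contraction yields such a path.
-/


open Finset

attribute [local instance] Classical.propDecidable

namespace Multigraph

/-! ### Gluing two classes of an equivalence relation -/

/-- The equivalence relation obtained from `s` by merging the classes of `a` and `b`, given
by the explicit description of its pairs (so that no closure has to be unfolded). -/
def glue {V : Type} (s : Setoid V) (a b : V) : Setoid V where
  r x y := s x y ∨ s x a ∧ s b y ∨ s x b ∧ s a y
  iseqv := by
    constructor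
    · exact fun x => Or.inl (s.refl x)
    · rintro x y (h | ⟨h, h'⟩ | ⟨h, h'⟩)
      · exact Or.inl (s.symm h)
      · exact Or.inr (Or.inr ⟨s.symm h', s.symm h⟩)
      · exact Or.inr (Or.inl ⟨s.symm h', s.symm h⟩)
    · rintro x y z (h | ⟨h, h'⟩ | ⟨h, h'⟩) (k | ⟨k, k'⟩ | ⟨k, k'⟩)
      · exact Or.inl (s.trans h k)
      · exact Or.inr (Or.inl ⟨s.trans h k, k'⟩)
      · exact Or.inr (Or.inr ⟨s.trans h k, k'⟩)
      · exact Or.inr (Or.inl ⟨h, s.trans h' k⟩)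
      · exact Or.inr (Or.inl ⟨h, k'⟩)
      · exact Or.inl (s.trans h k')
      · exact Or.inr (Or.inr ⟨h, s.trans h' k⟩)
      · exact Or.inl (s.trans h k')
      · exact Or.inr (Or.inr ⟨h, k'⟩)

theorem glue_apply {V : Type} (s : Setoid V) (a b x y : V) :
    glue s a b x y ↔ s x y ∨ s x a ∧ s b y ∨ s x b ∧ s a y := Iff.rfl

theorem le_glue {V : Type} (s : Setoid V) (a b : V) : s ≤ glue s a b :=
  fun _ _ h => Or.inl h

theorem glue_rel {V : Type} (s : Setoid V) (a b : V) : glue s a b a b :=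
  Or.inr (Or.inl ⟨s.refl a, s.refl b⟩)

theorem glue_le {V : Type} {s t : Setoid V} {a b : V} (h : s ≤ t) (hab : t a b) :
    glue s a b ≤ t := by
  rintro x y (k | ⟨k, k'⟩ | ⟨k, k'⟩)
  · exact h k
  · exact t.trans (h k) (t.trans hab (h k'))
  · exact t.trans (h k) (t.trans (t.symm hab) (h k'))

theorem glue_eq_self {V : Type} {s : Setoid V} {a b : V} (hab : s a b) : glue s a b = s :=
  le_antisymm (glue_le le_rfl hab) (le_glue s a b)

theorem glue_mono {V : Type} {s t : Setoid V} (h : s ≤ t) (a b : V) : glue s a b ≤ glue t a b :=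
  glue_le (h.trans (le_glue t a b)) (glue_rel t a b)

/-- Merging two distinct classes lowers the number of classes by exactly one: the classes of
`glue s a b` are represented uniquely by the classes of `s` other than that of `b`. -/
theorem card_glue {V : Type} [Finite V] {s : Setoid V} {a b : V} (hab : ¬ s a b) :
    Nat.card (Quotient (glue s a b)) + 1 = Nat.card (Quotient s) := by
  let f : {q : Quotient s // q ≠ Quotient.mk s b} → Quotient (glue s a b) := fun q =>
    Quotient.map' id (fun _ _ h => le_glue s a b h) q.1
  have hf : Function.Bijective f := by
    constructor
    · rintro ⟨q, hq⟩ ⟨q', hq'⟩ h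
      induction q using Quotient.inductionOn with | _ x =>
      induction q' using Quotient.inductionOn with | _ y =>
      have h' : glue s a b x y := Quotient.exact h
      rcases h' with h | ⟨_, h⟩ | ⟨h, _⟩
      · exact Subtype.ext (Quotient.sound h)
      · exact absurd (Quotient.sound (s.symm h)) hq'
      · exact absurd (Quotient.sound h) hq
    · intro q
      induction q using Quotient.inductionOn with | _ x =>
      by_cases hx : s x b
      · exact ⟨⟨Quotient.mk s a, fun h => hab (Quotient.exact h)⟩,
          Quotient.sound (Or.inr (Or.inl ⟨s.refl a, s.symm hx⟩))⟩
      · exact ⟨⟨Quotient.mk s x, fun h => hx (Quotient.exact h)⟩, rfl⟩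
  rw [← Nat.card_congr (Equiv.ofBijective f hf), ← Finite.card_option,
    Nat.card_congr (Equiv.optionSubtypeNe (Quotient.mk s b))]

/-! ### Edges, components and forests -/

variable {V E : Type}

theorem compSetoid_rel (G : Multigraph V E) {A : Finset E} {e : E} (he : e ∈ A) :
    G.compSetoid A (G.ends e).1 (G.ends e).2 :=
  Relation.EqvGen.rel _ _ ⟨e, he, Or.inl rfl⟩

theorem compSetoid_le (G : Multigraph V E) {A : Finset E} {t : Setoid V}
    (h : ∀ e ∈ A, t (G.ends e).1 (G.ends e).2) : G.compSetoid A ≤ t := by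
  refine Setoid.eqvGen_le ?_
  rintro x y ⟨e, he, h' | h'⟩
  · simpa [h'] using h e he
  · exact t.symm (by simpa [h'] using h e he)

theorem compSetoid_mono (G : Multigraph V E) {A B : Finset E} (h : A ⊆ B) :
    G.compSetoid A ≤ G.compSetoid B :=
  G.compSetoid_le fun _ he => G.compSetoid_rel (h he)

theorem compSetoid_insert [DecidableEq E] (G : Multigraph V E) (A : Finset E) (e : E) :
    G.compSetoid (insert e A) = glue (G.compSetoid A) (G.ends e).1 (G.ends e).2 := by
  refine le_antisymm (G.compSetoid_le fun e' he' => ?_)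
    (glue_le (G.compSetoid_mono (subset_insert e A)) (G.compSetoid_rel (mem_insert_self e A)))
  rcases mem_insert.1 he' with rfl | h
  · exact glue_rel _ _ _
  · exact le_glue _ _ _ (G.compSetoid_rel h)

/-- `A` is a forest iff no edge of `A` has its endpoints joined by the other edges of `A`. -/
theorem isForest_iff [Finite V] [DecidableEq E] (G : Multigraph V E) (A : Finset E) :
    G.IsForest A ↔ ∀ e ∈ A, ¬ G.compSetoid (A.erase e) (G.ends e).1 (G.ends e).2 := by
  refine forall₂_congr fun e he => not_congr ?_
  have h := G.compSetoid_insert (A.erase e) e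
  rw [insert_erase he] at h
  unfold k
  rw [h]
  refine ⟨fun hk => ?_, fun hr => by rw [glue_eq_self hr]⟩
  by_contra hr
  have := card_glue hr
  omega

/-- If `A` joins two distinct vertices `v` and `v'`, then some edge `e ∈ A` closes a cycle with
an additional edge `v v'`: its endpoints are joined by `A - e` together with `v v'`. -/
theorem exists_glue_of_reach [DecidableEq E] (G : Multigraph V E) {v v' : V} (hv : v ≠ v')
    (A : Finset E) (h : G.compSetoid A v v') :
    ∃ e ∈ A, glue (G.compSetoid (A.erase e)) v v' (G.ends e).1 (G.ends e).2 := by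
  induction A using Finset.induction_on with
  | empty =>
    have : G.compSetoid ∅ ≤ ⊥ := G.compSetoid_le (by simp)
    exact absurd (this h) hv
  | insert e A he ih =>
    by_cases hA : G.compSetoid A v v'
    · obtain ⟨e', he', h'⟩ := ih hA
      exact ⟨e', mem_insert_of_mem he',
        glue_mono (G.compSetoid_mono (erase_subset_erase _ (subset_insert e A))) v v' h'⟩
    · refine ⟨e, mem_insert_self e A, ?_⟩
      rw [erase_insert he]
      rw [compSetoid_insert] at h
      -- Adding `e` joins the vertices only by merging the components of its two endpoints.
      set s := G.compSetoid A
      rcases h with h | ⟨hx, hy⟩ | ⟨hx, hy⟩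
      · exact absurd h hA
      · exact Or.inr (Or.inl ⟨s.symm hx, s.symm hy⟩)
      · exact Or.inr (Or.inr ⟨hy, hx⟩)

/-! ### The contracted graph -/

/-- The edges of `G` as edges of `G(v, v')`. -/
def edgeEquiv (E : Type) : E ≃ {e' : Option E // e' ≠ none} where
  toFun e := ⟨some e, by simp⟩
  invFun e' := e'.1.get (Option.ne_none_iff_isSome.1 e'.2)
  left_inv e := rfl
  right_inv e' := Subtype.ext (by simp)

/-- The graph `G(v, v')`: add an edge joining `v` and `v'`, then contract it. -/
abbrev joined (G : Multigraph V E) (v v' : V) :=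
  (G.addEdge v v').contract none

/-- Two vertices of `G` are joined by `A` in `G(v, v')` iff they are related once the components
of `v` and `v'` in `(V, A)` are merged. -/
theorem comap_compSetoid_joined (G : Multigraph V E) (v v' : V) (A : Finset E) :
    ((G.joined v v').compSetoid (A.map (edgeEquiv E).toEmbedding)).comap
      (Quotient.mk ((G.addEdge v v').contrSetoid none)) = glue (G.compSetoid A) v v' := by
  have hvv : (G.addEdge v v').contrSetoid none v v' := Relation.EqvGen.rel _ _ rfl
  have hc : (G.addEdge v v').contrSetoid none ≤ glue (G.compSetoid A) v v' := by
    refine Setoid.eqvGen_le fun x y h => ?_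
    obtain ⟨rfl, rfl⟩ : v = x ∧ v' = y := by simpa [addEdge] using h
    exact glue_rel _ _ _
  refine le_antisymm ?_ (glue_le (G.compSetoid_le fun e he => ?_) ?_)
  · -- By `hc`, merging the components of the two ends of the new edge makes sense on the
    -- quotient, where it gives an equivalence relation `t` relating the endpoints of each edge.
    let t : Setoid (Quotient ((G.addEdge v v').contrSetoid none)) :=
      Setoid.ker (Quotient.map' (s₂ := glue (G.compSetoid A) v v') id fun _ _ h => hc h)
    have ht : (G.joined v v').compSetoid (A.map (edgeEquiv E).toEmbedding) ≤ t := by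
      refine compSetoid_le _ fun e' he' => ?_
      obtain ⟨e, he, rfl⟩ := mem_map.1 he'
      exact Quotient.sound (le_glue _ _ _ (G.compSetoid_rel he))
    intro x y h
    exact Quotient.exact (s := glue (G.compSetoid A) v v') (ht h)
  · exact (G.joined v v').compSetoid_rel (e := edgeEquiv E e)
      (mem_map_of_mem (edgeEquiv E).toEmbedding he)
  · rw [Setoid.comap_rel, Quotient.sound hvv]

theorem k_joined (G : Multigraph V E) (v v' : V) (A : Finset E) :
    (G.joined v v').k (A.map (edgeEquiv E).toEmbedding)
      = Nat.card (Quotient (glue (G.compSetoid A) v v')) := by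
  rw [← comap_compSetoid_joined]
  refine (Nat.card_congr ((Setoid.comapQuotientEquiv _ _).trans
    (Equiv.subtypeUnivEquiv fun q => ?_))).symm
  induction q using Quotient.inductionOn with | _ w =>
  induction w using Quotient.inductionOn with | _ x =>
  exact ⟨x, rfl⟩

/-- For `v ≠ v'`, the forests of `G(v, v')` are the forests of `G` separating `v` and `v'`. -/
theorem isForest_joined [Finite V] [DecidableEq E] [DecidableEq {e' : Option E // e' ≠ none}]
    (G : Multigraph V E) {v v' : V} (hv : v ≠ v') (A : Finset E) :
    (G.joined v v').IsForest (A.map (edgeEquiv E).toEmbedding) ↔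
      G.IsForest A ∧ ¬ G.Reach A v v' := by
  have key : (G.joined v v').IsForest (A.map (edgeEquiv E).toEmbedding) ↔
      ∀ e ∈ A, ¬ glue (G.compSetoid (A.erase e)) v v' (G.ends e).1 (G.ends e).2 := by
    rw [isForest_iff, forall_mem_map]
    refine forall₂_congr fun e _ => not_congr ?_
    rw [← map_erase, ← comap_compSetoid_joined, Setoid.comap_rel]
    rfl
  rw [key, isForest_iff]
  constructor
  · refine fun h => ⟨fun e he h' => h e he (le_glue _ _ _ h'), fun hr => ?_⟩
    obtain ⟨e, he, h'⟩ := G.exists_glue_of_reach hv A hr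
    exact h e he h'
  · rintro ⟨hF, hr⟩ e he h
    have hle := G.compSetoid_mono (erase_subset e A)
    have hee := G.compSetoid_rel he
    set s := G.compSetoid A
    refine hr (show s v v' from ?_)
    rcases h with h | ⟨h, h'⟩ | ⟨h, h'⟩
    · exact absurd h (hF e he)
    · exact s.trans (s.symm (hle h)) (s.trans hee (s.symm (hle h')))
    · exact s.trans (hle h') (s.trans (s.symm hee) (hle h))

/-- For `v ≠ v'`, the spanning trees of `G(v, v')` are the 2-trees of `G` separating `v`, `v'`. -/
theorem isTree_joined [Finite V] [DecidableEq E] [DecidableEq {e' : Option E // e' ≠ none}]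
    (G : Multigraph V E) {v v' : V} (hv : v ≠ v') (A : Finset E) :
    ((G.joined v v').IsForest (A.map (edgeEquiv E).toEmbedding) ∧
      (G.joined v v').k (A.map (edgeEquiv E).toEmbedding) = 1) ↔
      G.IsForest A ∧ G.k A = 2 ∧ ¬ G.Reach A v v' := by
  rw [isForest_joined G hv, k_joined, and_assoc, and_comm (a := G.k A = 2)]
  refine and_congr_right fun _ => and_congr_right fun hr => ?_
  have := card_glue (s := G.compSetoid A) hr
  unfold k
  omega

theorem treePoly_joined [Finite V] [Fintype E] [DecidableEq E]
    [Fintype {e' : Option E // e' ≠ none}] [DecidableEq {e' : Option E // e' ≠ none}]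
    (G : Multigraph V E) {v v' : V} (hv : v ≠ v') (α : E → ℝ) :
    (G.joined v v').treePoly (fun e' => e'.1.elim 0 α)
      = ∑ A ∈ Finset.univ.filter
          (fun A => G.IsForest A ∧ G.k A = 2 ∧ ¬ G.Reach A v v'),
          ∏ e ∈ Finset.univ \ A, α e := by
  unfold treePoly
  symm
  refine Finset.sum_equiv (edgeEquiv E).finsetCongr (fun A => ?_) (fun A _ => ?_)
  · rw [mem_filter_univ, mem_filter_univ]
    exact (isTree_joined G hv A).symm
  · refine Finset.prod_equiv (edgeEquiv E) (fun e => ?_) (fun e _ => rfl)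
    simp [Equiv.finsetCongr]

end Multigraph

/-- for distinct vertices `v ≠ v'`, the first Symanzik polynomial of
`G(v,v')` (obtained by adding a new edge joining `v` and `v'` and contracting it)
is the generating polynomial of 2-trees of `G` separating `v` and `v'`; consequently
the second Symanzik polynomial `V_G(α,p)` is the corresponding quadratic form in the
total flag momenta. -/
theorem second_symanzik_via_contraction {V E Fl : Type} {d : ℕ}
    [Fintype V] [Fintype E] [DecidableEq E] [DecidableEq V] [Fintype Fl]
    (G : Multigraph V E) (hconn : G.k Finset.univ = 1)
    (attach : Fl → V) (p : Fl → Fin d → ℝ) (α : E → ℝ) :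
    (∀ v v' : V, v ≠ v' →
      ((G.addEdge v v').contract none).treePoly (fun e' => e'.1.elim 0 α)
        = ∑ A ∈ Finset.univ.filter
            (fun A => G.IsForest A ∧ G.k A = 2 ∧ ¬ G.Reach A v v'),
            ∏ e ∈ Finset.univ \ A, α e)
    ∧
    (-(1 / 2 : ℝ)) * (∑ v : V, ∑ v' ∈ Finset.univ.erase v,
        dotp (flagP attach p v) (flagP attach p v') *
          ∑ A ∈ Finset.univ.filter
            (fun A => G.IsForest A ∧ G.k A = 2 ∧ ¬ G.Reach A v v'),
            ∏ e ∈ Finset.univ \ A, α e)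
      = (-(1 / 2 : ℝ)) * (∑ v : V, ∑ v' ∈ Finset.univ.erase v,
        dotp (flagP attach p v) (flagP attach p v') *
          ((G.addEdge v v').contract none).treePoly (fun e' => e'.1.elim 0 α)) := by
  refine ⟨fun v v' hv => G.treePoly_joined hv α, ?_⟩
  congr 1
  refine Finset.sum_congr rfl fun v _ => Finset.sum_congr rfl fun v' hv' => ?_
  rw [G.treePoly_joined (Finset.ne_of_mem_erase hv').symm α]
end

section
/- (Tree-matrix theorem) Let A be an n×n matrix over a commutative ring such that Σ_{i=1}^n A_{ij} = 0 for every column j. Let A^{11} denote the (n−1)×(n−1) matrix obtained from A by deleting the first row and the first column. Then det A^{11} = Σ_T Π_{(u→w)∈T} (−A_{uw}), where the sum runs over all spanning trees T of the complete graph on {1,…,n}, each tree being oriented away from the root 1, and an edge of T oriented from parent u to child w contributes the factor −A_{uw}. -/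
/-!
Write `e_0 = 0` and let `e_1, …, e_n` be the standard basis. As the columns of `A` sum to zero, the
`j`-th column of `A^{11}` is `∑ u, (-A u j) (e_j - e_u)`. Expanding the determinant multilinearly
gives a sum over all parent functions `g` on the non-root vertices, the term of `g` being
`∏ j, -A (g j) j` times the determinant of the matrix with vectors `e_j - e_{g j}`.
That determinant is `1` if every vertex reaches the root (`det_parentMatrix_of_reach`: the matrix
is unitriangular with respect to depth), and `0` otherwise (`det_parentMatrix_of_not_reach`:
the indicator of the set of vertices that never reach the root lies in its kernel).
-/

open Finset

attribute [local instance] Classical.propDecidable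

/-- The matrix whose `j`-th row is `e_j - e_{g j}`, where `e_0 = 0` stands for the root. A non-root
vertex is indexed by its predecessor, so `g` lists the parents of `1, …, n`. -/
def parentMatrix (R : Type) [CommRing R] {n : ℕ} (g : Fin n → Fin (n + 1)) :
    Matrix (Fin n) (Fin n) R :=
  fun j i => (if j = i then 1 else 0) - (if g j = i.succ then 1 else 0)

theorem det_parentMatrix_of_reach {R : Type} [CommRing R] {n : ℕ} (g : Fin n → Fin (n + 1))
    (h : ∀ i : Fin (n + 1), ∃ m : ℕ, (Fin.cons 0 g : Fin (n + 1) → Fin (n + 1))^[m] i = 0) :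
    (parentMatrix R g).det = 1 := by
  set f : Fin (n + 1) → Fin (n + 1) := Fin.cons 0 g with hf
  let d : Fin n → ℕ := fun i => Nat.find (h i.succ)
  -- a parent is strictly closer to the root than its child
  have key : ∀ i j, g j = i.succ → d i < d j := by
    intro i j hij
    have hs : f^[d j] j.succ = 0 := Nat.find_spec (h j.succ)
    rcases hd : d j with _ | m
    · rw [hd] at hs
      exact absurd hs (Fin.succ_ne_zero j)
    · rw [hd, Function.iterate_succ_apply] at hs
      have hfj : f j.succ = i.succ := by rw [hf, Fin.cons_succ, hij]
      rw [hfj] at hs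
      exact Nat.lt_succ_of_le (Nat.find_min' (h i.succ) hs)
  have hT : (parentMatrix R g).transpose.BlockTriangular d := by
    intro i j hlt
    have h1 : j ≠ i := by rintro rfl; exact lt_irrefl _ hlt
    have h2 : g j ≠ i.succ := fun hc => lt_asymm hlt (key i j hc)
    simp [parentMatrix, h1, h2]
  rw [← Matrix.det_transpose, hT.det]
  refine Finset.prod_eq_one fun a _ => ?_
  have hb : (parentMatrix R g).transpose.toSquareBlock d a = 1 := by
    ext ⟨i, hi⟩ ⟨j, hj⟩
    have h2 : g j ≠ i.succ := fun hc => absurd (key i j hc) (by rw [hi, hj]; exact lt_irrefl _)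
    simp [Matrix.toSquareBlock, Matrix.toSquareBlockProp, parentMatrix, h2, Matrix.one_apply,
      eq_comm]
  rw [hb, Matrix.det_one]

theorem det_parentMatrix_of_not_reach {R : Type} [CommRing R] {n : ℕ} (g : Fin n → Fin (n + 1))
    (h : ¬ ∀ i : Fin (n + 1), ∃ m : ℕ, (Fin.cons 0 g : Fin (n + 1) → Fin (n + 1))^[m] i = 0) :
    (parentMatrix R g).det = 0 := by
  set f : Fin (n + 1) → Fin (n + 1) := Fin.cons 0 g with hf
  push Not at h
  obtain ⟨i₀, hi₀⟩ := h
  let w : Fin (n + 1) → R := fun i => if ∃ m : ℕ, f^[m] i = 0 then 0 else 1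
  have hw0 : w 0 = 0 := if_pos ⟨0, rfl⟩
  have hwi : w i₀ = 1 := if_neg (by push Not; exact hi₀)
  have hne : i₀ ≠ 0 := hi₀ 0
  obtain ⟨k, rfl⟩ := Fin.exists_succ_eq.mpr hne
  -- a vertex reaches the root exactly when its parent does
  have hstep : ∀ j : Fin n, w (g j) = w j.succ := by
    intro j
    have hfj : f j.succ = g j := by rw [hf, Fin.cons_succ]
    have : (∃ m : ℕ, f^[m] (g j) = 0) ↔ ∃ m : ℕ, f^[m] j.succ = 0 := by
      constructor
      · rintro ⟨m, hm⟩
        exact ⟨m + 1, by rw [Function.iterate_succ_apply, hfj, hm]⟩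
      · rintro ⟨m, hm⟩
        rcases m with _ | m
        · exact absurd hm (Fin.succ_ne_zero j)
        · exact ⟨m, by rwa [Function.iterate_succ_apply, hfj] at hm⟩
    simp only [w, this]
  have hsum : ∀ u : Fin (n + 1), ∑ i : Fin n, (if u = i.succ then w i.succ else 0) = w u := by
    intro u
    have := Fin.sum_univ_succ (fun i : Fin (n + 1) => if u = i then w i else 0)
    rw [Finset.sum_ite_eq] at this
    simpa [hw0] using this.symm
  have hker : (parentMatrix R g).mulVec (fun i => w i.succ) = 0 := by
    ext j
    simp only [Matrix.mulVec, dotProduct, parentMatrix, sub_mul, ite_mul, one_mul, zero_mul,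
      Finset.sum_sub_distrib, hsum, hstep]
    simp
  -- over an arbitrary ring the adjugate only shows `det • w = 0`; the entry `1` of `w` then suffices
  have hadj := congrArg (Matrix.mulVec (parentMatrix R g).adjugate) hker
  rw [Matrix.mulVec_mulVec, Matrix.adjugate_mul, Matrix.smul_mulVec, Matrix.one_mulVec,
    Matrix.mulVec_zero] at hadj
  have := congrFun hadj k
  simpa [hwi] using this

/-- tree-matrix theorem: if all columns of `A` sum to zero then the
principal minor `det A^{11}` is the sum over spanning trees of the complete graph on
`{0, …, n}` oriented away from the root `0`; such a tree is encoded by its parent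
function `f` (with `f 0 = 0` and every vertex reaching the root under iteration),
the edge from the parent `f i` to the child `i` contributing `-A (f i) i`. -/
theorem tree_matrix_theorem {R : Type} [CommRing R] (n : ℕ)
    (A : Matrix (Fin (n + 1)) (Fin (n + 1)) R)
    (hA : ∀ j, ∑ i, A i j = 0) :
    (A.submatrix Fin.succ Fin.succ).det
      = ∑ f ∈ Finset.univ.filter
          (fun f : Fin (n + 1) → Fin (n + 1) =>
            f 0 = 0 ∧ ∀ i : Fin (n + 1), ∃ m : ℕ, f^[m] i = 0),
          ∏ i : Fin n, -A (f i.succ) i.succ := by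
  have hcol : (A.submatrix Fin.succ Fin.succ).transpose
      = fun j => ∑ u : Fin (n + 1), (-A u j.succ) •
          (fun i : Fin n => ((if j = i then 1 else 0) - (if u = i.succ then 1 else 0) : R)) := by
    ext j i
    simp only [Matrix.transpose_apply, Matrix.submatrix_apply, Finset.sum_apply, Pi.smul_apply,
      smul_eq_mul, mul_sub, Finset.sum_sub_distrib, ← Finset.sum_mul, Finset.sum_neg_distrib, hA]
    simp
  have hexp : (A.submatrix Fin.succ Fin.succ).det
      = ∑ g : Fin n → Fin (n + 1), (∏ j, -A (g j) j.succ) * (parentMatrix R g).det := by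
    rw [← Matrix.det_transpose, hcol]
    refine ((Matrix.detRowAlternating (R := R) (n := Fin n)).toMultilinearMap.map_sum _).trans ?_
    refine Finset.sum_congr rfl fun g _ => ?_
    exact (Matrix.detRowAlternating (R := R) (n := Fin n)).toMultilinearMap.map_smul_univ _
      (parentMatrix R g)
  rw [hexp]
  have hfil : ∑ g : Fin n → Fin (n + 1), (∏ j, -A (g j) j.succ) * (parentMatrix R g).det
      = ∑ g ∈ Finset.univ.filter (fun g : Fin n → Fin (n + 1) =>
          ∀ i : Fin (n + 1), ∃ m : ℕ, (Fin.cons 0 g : Fin (n + 1) → Fin (n + 1))^[m] i = 0),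
        ∏ j, -A (g j) j.succ := by
    rw [Finset.sum_filter]
    refine Finset.sum_congr rfl fun g _ => ?_
    split_ifs with h
    · rw [det_parentMatrix_of_reach g h, mul_one]
    · rw [det_parentMatrix_of_not_reach g h, mul_zero]
  rw [hfil]
  have hcons : ∀ f : Fin (n + 1) → Fin (n + 1), f 0 = 0 →
      (Fin.cons 0 (fun k : Fin n => f k.succ) : Fin (n + 1) → Fin (n + 1)) = f := by
    intro f hf
    ext i
    refine Fin.cases ?_ (fun k => ?_) i <;> simp [hf]
  refine Finset.sum_nbij' (fun g => (Fin.cons 0 g : Fin (n + 1) → Fin (n + 1)))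
    (fun f k => f k.succ) ?_ ?_ ?_ ?_ ?_
  · intro g hg
    simp only [Finset.mem_filter, Finset.mem_univ, true_and] at hg ⊢
    exact ⟨rfl, hg⟩
  · intro f hf
    simp only [Finset.mem_filter, Finset.mem_univ, true_and] at hf ⊢
    rw [hcons f hf.1]
    exact hf.2
  · intro g _
    rfl
  · intro f hf
    simp only [Finset.mem_filter, Finset.mem_univ, true_and] at hf
    exact hcons f hf.1
  · intro g _
    rfl
end

section
/- Let G = (V,E) be a connected finite multigraph with flag momenta p_f ∈ ℝ^d satisfying Σ_f p_f = 0. Then −(1/2) Σ_{v≠v'} p_v·p_{v'} · (∂²𝒰_G/∂q_v∂q_{v'})(α,q)|_{q=0} = V_G(α,p), where V_G(α,p) = Σ_{T₂ 2-tree with components G₁,G₂} p_{G₁}² Π_{e∉T₂} α_e is the second Symanzik polynomial. -/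
/-!
For a spanning forest `A` with component map `π : V → V/A`, the summand of `𝒰_G` is a constant
times `∏_c L_c`, where `L_c = ∑_{π v = c} q_v`. Since `∂L_c/∂q_v` is `1` or `0` according to whether
`π v = c`, each derivative just deletes a factor (`pderiv_prod_compForm`). Hence
`∂²/∂q_v∂q_{v'}` at `q = 0` is `1` exactly when `π v ≠ π v'` and no factor is left, i.e. when
`A` has two components separating `v` and `v'` (`eval_pderiv_pderiv_prod_compForm`).

For a 2-tree with chosen component `c`, a pair `(v, v')` is separated iff exactly one of the two
lies in `c`. The vertices in `c` carry total momentum `p_c`, those outside `-p_c` by momentum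
conservation, so the sum of `p_v · p_{v'}` over separated ordered pairs is `-2 p_c²`
(`sum_separated_dotp`), and the prefactor `-1/2` gives `p_c²`.
-/

open Finset

attribute [local instance] Classical.propDecidable

namespace Multigraph
/-- The generalized first Symanzik polynomial `𝒰_G(α, q)` as a polynomial
in the vertex weight variables `q_v`. -/
noncomputable def genUPoly (G : Multigraph V E) [Fintype V] [Fintype E] [DecidableEq E]
    (α : E → ℝ) : MvPolynomial V ℝ :=
  ∑ A ∈ Finset.univ.filter (fun A => G.IsForest A),
    MvPolynomial.C (∏ e ∈ Finset.univ \ A, α e) *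
      ∏ c : Quotient (G.compSetoid A),
        ∑ v ∈ Finset.univ.filter (fun v => Quotient.mk (G.compSetoid A) v = c),
          MvPolynomial.X v
end Multigraph

namespace Multigraph

/-- The linear form `∑_{v ∈ c} q_v` attached to a component `c` of `(V, A)`. -/
noncomputable def compForm {V E : Type} [Fintype V] (G : Multigraph V E) (A : Finset E)
    (c : Quotient (G.compSetoid A)) : MvPolynomial V ℝ :=
  ∑ v ∈ Finset.univ.filter (fun v => Quotient.mk (G.compSetoid A) v = c), MvPolynomial.X v

lemma mk_ne_mk_iff {V E : Type} (G : Multigraph V E) (A : Finset E)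
    {c : Quotient (G.compSetoid A)} (hk : G.k A = 2) (v v' : V) :
    Quotient.mk (G.compSetoid A) v ≠ Quotient.mk (G.compSetoid A) v' ↔
      ¬ (Quotient.mk (G.compSetoid A) v = c ↔ Quotient.mk (G.compSetoid A) v' = c) := by
  obtain ⟨x, y, _, hu⟩ := Nat.card_eq_two_iff.1 hk
  have key : ∀ z : Quotient (G.compSetoid A), z = x ∨ z = y := fun z => by
    have : z ∈ ({x, y} : Set _) := hu ▸ Set.mem_univ z
    simpa using this
  have := key c
  have := key (Quotient.mk _ v)
  have := key (Quotient.mk _ v')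
  grind

variable {V E Fl : Type} {d : ℕ} [Fintype V] (G : Multigraph V E) (A : Finset E)

lemma pderiv_compForm (v : V) (c : Quotient (G.compSetoid A)) :
    MvPolynomial.pderiv v (G.compForm A c)
      = if Quotient.mk (G.compSetoid A) v = c then 1 else 0 := by
  simp only [compForm, map_sum, MvPolynomial.pderiv_X, Pi.single_apply]
  rw [Finset.sum_ite_eq']
  simp

lemma eval_zero_compForm (c : Quotient (G.compSetoid A)) :
    MvPolynomial.eval (fun _ => (0 : ℝ)) (G.compForm A c) = 0 := by
  simp [compForm]

/-- Differentiating a product of component forms in `q_v` deletes the factor of the component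
of `v`, and gives zero if that factor is absent. -/
lemma pderiv_prod_compForm (v : V) (s : Finset (Quotient (G.compSetoid A))) :
    MvPolynomial.pderiv v (∏ c ∈ s, G.compForm A c)
      = if Quotient.mk (G.compSetoid A) v ∈ s then
          ∏ c ∈ s.erase (Quotient.mk (G.compSetoid A) v), G.compForm A c
        else 0 := by
  induction s using Finset.induction_on with
  | empty => simp
  | insert a s ha ih =>
    rw [Finset.prod_insert ha, Derivation.leibniz, ih, pderiv_compForm]
    by_cases h : Quotient.mk (G.compSetoid A) v = a
    · subst h
      simp [ha]
    · by_cases hs : Quotient.mk (G.compSetoid A) v ∈ s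
      · rw [Finset.erase_insert_of_ne (Ne.symm h), Finset.prod_insert (by simp [ha])]
        simp [h, hs]
      · simp [h, hs]

lemma eval_pderiv_pderiv_prod_compForm (v v' : V) :
    MvPolynomial.eval (fun _ => (0 : ℝ)) (MvPolynomial.pderiv v (MvPolynomial.pderiv v'
        (∏ c, G.compForm A c)))
      = if Quotient.mk (G.compSetoid A) v ≠ Quotient.mk (G.compSetoid A) v' ∧ G.k A = 2
        then 1 else 0 := by
  rw [pderiv_prod_compForm, if_pos (Finset.mem_univ _), pderiv_prod_compForm]
  simp only [Finset.mem_erase, Finset.mem_univ, and_true]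
  by_cases h : Quotient.mk (G.compSetoid A) v = Quotient.mk (G.compSetoid A) v'
  · simp [h]
  · have hmem : Quotient.mk (G.compSetoid A) v ∈
        Finset.univ.erase (Quotient.mk (G.compSetoid A) v') := by simp [h]
    have h1 := Finset.card_erase_add_one hmem
    have h2 := Finset.card_erase_add_one (Finset.mem_univ (Quotient.mk (G.compSetoid A) v'))
    have hk : G.k A = (Finset.univ : Finset (Quotient (G.compSetoid A))).card := by
      rw [k, Nat.card_eq_fintype_card, Finset.card_univ]
    simp only [ne_eq, h, not_false_eq_true, if_true, true_and, map_prod, eval_zero_compForm,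
      Finset.prod_const]
    by_cases h0 : G.k A = 2
    · rw [if_pos h0, show Finset.card _ = 0 by omega, pow_zero]
    · rw [if_neg h0, zero_pow (by omega)]

lemma eval_pderiv_pderiv_genUPoly [Fintype E] [DecidableEq E] (α : E → ℝ) (v v' : V) :
    MvPolynomial.eval (fun _ => (0 : ℝ)) (MvPolynomial.pderiv v (MvPolynomial.pderiv v'
        (G.genUPoly α)))
      = ∑ A ∈ Finset.univ.filter (fun A => G.IsForest A ∧ G.k A = 2),
          if Quotient.mk (G.compSetoid A) v ≠ Quotient.mk (G.compSetoid A) v'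
          then ∏ e ∈ Finset.univ \ A, α e else 0 := by
  rw [← Finset.filter_filter, Finset.sum_filter _ (f := fun A => ite _ _ _)]
  simp only [genUPoly, map_sum]
  refine Finset.sum_congr rfl fun A _ => ?_
  rw [MvPolynomial.pderiv_C_mul, MvPolynomial.pderiv_C_mul, map_mul, MvPolynomial.eval_C]
  refine (congrArg _ (G.eval_pderiv_pderiv_prod_compForm A v v')).trans ?_
  by_cases h : G.k A = 2 <;> simp [h]

variable [Fintype Fl] (attach : Fl → V) (p : Fl → Fin d → ℝ)

lemma pComp_eq_sum_flagP (c : Quotient (G.compSetoid A)) :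
    G.pComp A attach p c
      = ∑ v, if Quotient.mk (G.compSetoid A) v = c then flagP attach p v else 0 := by
  simp only [pComp, flagP, Finset.sum_filter]
  have h : ∀ v, (if Quotient.mk (G.compSetoid A) v = c then
        ∑ f, (if attach f = v then p f else 0) else 0)
      = ∑ f, if attach f = v then
          (if Quotient.mk (G.compSetoid A) (attach f) = c then p f else 0) else 0 := by
    intro v
    split_ifs with hv
    · refine Finset.sum_congr rfl fun f _ => ?_
      by_cases hf : attach f = v <;> simp [hf, hv]
    · refine (Finset.sum_eq_zero fun f _ => ?_).symm
      by_cases hf : attach f = v <;> simp [hf, hv]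
  simp_rw [h]
  rw [Finset.sum_comm]
  simp

lemma sum_flagP : ∑ v, flagP attach p v = ∑ f, p f := by
  simp only [flagP, Finset.sum_filter]
  rw [Finset.sum_comm]
  simp

/-- Over ordered pairs of vertices separated by a two-component subgraph, the products
`p_v · p_{v'}` add up to `-2 p_c²`, for either component `c`. -/
lemma sum_separated_dotp (hcons : ∑ f : Fl, p f = 0) (hk : G.k A = 2)
    (c : Quotient (G.compSetoid A)) :
    (∑ v, ∑ v', if Quotient.mk (G.compSetoid A) v ≠ Quotient.mk (G.compSetoid A) v'
        then dotp (flagP attach p v) (flagP attach p v') else 0)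
      = -2 * dotp (G.pComp A attach p c) (G.pComp A attach p c) := by
  have hout : (∑ v, if Quotient.mk (G.compSetoid A) v = c then 0 else flagP attach p v)
      = -G.pComp A attach p c := by
    rw [eq_neg_iff_add_eq_zero, pComp_eq_sum_flagP, ← Finset.sum_add_distrib]
    refine Eq.trans ?_ ((sum_flagP attach p).trans hcons)
    refine Finset.sum_congr rfl fun v _ => ?_
    split_ifs <;> simp
  have hin := (G.pComp_eq_sum_flagP A attach p c).symm
  have hsplit : ∀ v v', (if Quotient.mk (G.compSetoid A) v ≠ Quotient.mk (G.compSetoid A) v'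
        then dotp (flagP attach p v) (flagP attach p v') else 0)
      = ∑ i, ((if Quotient.mk (G.compSetoid A) v = c then flagP attach p v else 0) i
            * (if Quotient.mk (G.compSetoid A) v' = c then 0 else flagP attach p v') i
          + (if Quotient.mk (G.compSetoid A) v = c then 0 else flagP attach p v) i
            * (if Quotient.mk (G.compSetoid A) v' = c then flagP attach p v' else 0) i) := by
    intro v v'
    simp only [G.mk_ne_mk_iff A (c := c) hk v v']
    by_cases h : Quotient.mk (G.compSetoid A) v = c <;>
      by_cases h' : Quotient.mk (G.compSetoid A) v' = c <;> simp [h, h', dotp]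
  simp_rw [hsplit]
  rw [Finset.sum_congr rfl fun v _ => Finset.sum_comm, Finset.sum_comm, dotp, Finset.mul_sum]
  refine Finset.sum_congr rfl fun i _ => ?_
  have hout' := congrFun hout i
  have hin' := congrFun hin i
  rw [Finset.sum_apply] at hout' hin'
  simp_rw [Finset.sum_add_distrib]
  rw [← Finset.sum_mul_sum, ← Finset.sum_mul_sum, hout', hin', Pi.neg_apply]
  ring

end Multigraph

/-- for a connected graph, on the submanifold `Σ_f p_f = 0`,
`-(1/2) Σ_{v ≠ v'} p_v·p_{v'} ∂²𝒰_G/∂q_v∂q_{v'} |_{q=0}` equals the second Symanzik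
polynomial `V_G(α, p) = Σ_{T₂} p_{G₁}² Π_{e ∉ T₂} α_e` (well-definedness of `p_{G₁}²`
being expressed by quantifying over all choices of a vertex of `G₁`). -/
theorem second_pderiv_genUPoly_eq_secondSymanzik {V E Fl : Type} {d : ℕ}
    [Fintype V] [Fintype E] [DecidableEq E] [DecidableEq V] [Fintype Fl]
    (G : Multigraph V E) (hconn : G.k Finset.univ = 1)
    (attach : Fl → V) (p : Fl → Fin d → ℝ) (α : E → ℝ)
    (hcons : ∑ f : Fl, p f = 0) :
    ∀ choice : Finset E → V,
      (-(1 / 2 : ℝ)) * (∑ v : V, ∑ v' ∈ Finset.univ.erase v,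
          dotp (flagP attach p v) (flagP attach p v') *
            MvPolynomial.eval (fun _ => (0 : ℝ))
              (MvPolynomial.pderiv v (MvPolynomial.pderiv v' (G.genUPoly α))))
        = ∑ A ∈ Finset.univ.filter (fun A => G.IsForest A ∧ G.k A = 2),
            dotp (G.pComp A attach p (Quotient.mk (G.compSetoid A) (choice A)))
                 (G.pComp A attach p (Quotient.mk (G.compSetoid A) (choice A)))
              * ∏ e ∈ Finset.univ \ A, α e := by
  intro choice
  -- The diagonal terms may be added: a vertex is never separated from itself.
  have herase : ∀ v : V, (∑ v' ∈ Finset.univ.erase v,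
        dotp (flagP attach p v) (flagP attach p v') *
          MvPolynomial.eval (fun _ => (0 : ℝ))
            (MvPolynomial.pderiv v (MvPolynomial.pderiv v' (G.genUPoly α))))
      = ∑ v', ∑ A ∈ Finset.univ.filter (fun A => G.IsForest A ∧ G.k A = 2),
          (if Quotient.mk (G.compSetoid A) v ≠ Quotient.mk (G.compSetoid A) v'
            then dotp (flagP attach p v) (flagP attach p v') else 0)
          * ∏ e ∈ Finset.univ \ A, α e := by
    intro v
    rw [Finset.sum_erase]
    · refine Finset.sum_congr rfl fun v' _ => ?_
      rw [Multigraph.eval_pderiv_pderiv_genUPoly, Finset.mul_sum]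
      refine Finset.sum_congr rfl fun A _ => ?_
      split_ifs <;> simp
    · rw [Multigraph.eval_pderiv_pderiv_genUPoly]
      simp
  simp_rw [herase]
  rw [Finset.sum_congr rfl fun v _ => Finset.sum_comm, Finset.sum_comm, Finset.mul_sum]
  refine Finset.sum_congr rfl fun A hA => ?_
  simp_rw [← Finset.sum_mul]
  rw [G.sum_separated_dotp A attach p hcons (Finset.mem_filter.1 hA).2.2
    (Quotient.mk (G.compSetoid A) (choice A))]
  ring
end
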